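/- arXiv:1002.0419 — 2 statements merged into one kernel-verified Lean document; each statement's English description precedes it below -/
import Mathlib

section
/- Let A be a commutative noetherian local ring, let x, y ∈ A be a regular exact pair of zero divisors, and let a ∈ A be weakly regular on the A-module A/(x, y). Then the canonical A-algebra maps A → End_A(G_a) and A → End_A(H_a) are isomorphisms; in particular End_A(G_a) and End_A(H_a) are commutative noetherian local rings, and the A-modules G_a and H_a are indecomposable. -/
/-!
Formalization of results from "Construction of totally reflexive modules
from an exact pair of zero divisors" by Henrik Holm.
-/

noncomputable section

/-- Non-units `x, y` in `A` form an *exact pair of zero divisors* if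
`Ann_A(x) = (y)` and `Ann_A(y) = (x)`. -/
def IsExactZeroDivisorPair {A : Type*} [CommRing A] (x y : A) : Prop :=
  ¬ IsUnit x ∧ ¬ IsUnit y ∧
    (∀ a : A, a * x = 0 ↔ a ∈ Ideal.span {y}) ∧
    (∀ a : A, a * y = 0 ↔ a ∈ Ideal.span {x})

open Matrix in
/-- The matrix `γ_a = [[x, a], [0, y]]`. -/
def gammaMat {A : Type*} [CommRing A] (x y a : A) : Matrix (Fin 2) (Fin 2) A :=
  !![x, a; 0, y]

open Matrix in
/-- The matrix `η_a = [[y, -a], [0, x]]`. -/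
def etaMat {A : Type*} [CommRing A] (x y a : A) : Matrix (Fin 2) (Fin 2) A :=
  !![y, -a; 0, x]

/-- `G_a`, the cokernel of `γ_a : A² → A²`. -/
abbrev Gmod {A : Type*} [CommRing A] (x y a : A) : Type _ :=
  (Fin 2 → A) ⧸ LinearMap.range (Matrix.toLin' (gammaMat x y a))

/-- `H_a`, the cokernel of `η_a : A² → A²`. -/
abbrev Hmod {A : Type*} [CommRing A] (x y a : A) : Type _ :=
  (Fin 2 → A) ⧸ LinearMap.range (Matrix.toLin' (etaMat x y a))

/-- An `A`-module is *indecomposable* if it is nonzero and is not the internal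
direct sum of two nonzero submodules. -/
def IsIndecomposableModule (A : Type*) [CommRing A] (M : Type*)
    [AddCommGroup M] [Module A M] : Prop :=
  (∃ m : M, m ≠ 0) ∧ ∀ N P : Submodule A M, IsCompl N P → N = ⊥ ∨ P = ⊥

theorem mem_range_gamma {A : Type*} [CommRing A] (x y a p q : A) :
    (![p, q] ∈ LinearMap.range (Matrix.toLin' (gammaMat x y a))) ↔
      ∃ s t : A, p = x * s + a * t ∧ q = y * t := by
  constructor
  · rintro ⟨v, hv⟩
    refine ⟨v 0, v 1, ?_, ?_⟩
    · have := congrFun hv 0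
      simpa [gammaMat, Matrix.toLin'_apply, Matrix.mulVec, dotProduct, Fin.sum_univ_two]
        using this.symm
    · have := congrFun hv 1
      simpa [gammaMat, Matrix.toLin'_apply, Matrix.mulVec, dotProduct, Fin.sum_univ_two]
        using this.symm
  · rintro ⟨s, t, rfl, rfl⟩
    refine ⟨![s, t], ?_⟩
    ext i
    fin_cases i <;>
      simp [gammaMat, Matrix.toLin'_apply, Matrix.mulVec, dotProduct, Fin.sum_univ_two]

theorem G_bijective {A : Type*} [CommRing A] {x y : A}
    (hxy : IsExactZeroDivisorPair x y)
    (hreg : Ideal.span ({x} : Set A) ⊓ Ideal.span ({y} : Set A) = ⊥) {a : A}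
    (ha : Function.Injective
      fun m : A ⧸ Ideal.span ({x, y} : Set A) => a • m) :
    Function.Bijective (algebraMap A (Module.End A (Gmod x y a))) := by
  obtain ⟨-, -, hx, hy⟩ := hxy
  have hreg' : ∀ u v w : A, w = x * u → w = y * v → w = 0 := by
    intro u v w h1 h2
    have : w ∈ Ideal.span ({x} : Set A) ⊓ Ideal.span ({y} : Set A) :=
      ⟨Ideal.mem_span_singleton.2 ⟨u, h1⟩, Ideal.mem_span_singleton.2 ⟨v, h2⟩⟩
    rw [hreg] at this
    exact this
  have hx' : ∀ u : A, u * x = 0 → ∃ v, u = y * v := fun u hu =>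
    Ideal.mem_span_singleton.1 ((hx u).1 hu)
  have hy' : ∀ u : A, u * y = 0 → ∃ v, u = x * v := fun u hu =>
    Ideal.mem_span_singleton.1 ((hy u).1 hu)
  have hyx : y * x = 0 := (hx y).2 (Ideal.mem_span_singleton_self y)
  have ha' : ∀ u v w : A, a * u = x * v + y * w → ∃ b c, u = x * b + y * c := by
    intro u v w h
    have h0 : (Ideal.Quotient.mk (Ideal.span ({x, y} : Set A)) u) = 0 := by
      apply ha
      have : (Ideal.Quotient.mk (Ideal.span ({x, y} : Set A)) (a * u)) = 0 := by
        rw [Ideal.Quotient.eq_zero_iff_mem, Ideal.mem_span_pair]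
        exact ⟨v, w, by rw [h]; ring⟩
      simp only [smul_zero]
      rw [← this]
      rfl
    rw [Ideal.Quotient.eq_zero_iff_mem, Ideal.mem_span_pair] at h0
    obtain ⟨b, c, h⟩ := h0
    exact ⟨b, c, by rw [← h]; ring⟩
  set R := LinearMap.range (Matrix.toLin' (gammaMat x y a)) with hR
  have hmem : ∀ p q : A, (R.mkQ ![p, q] = 0) ↔ ∃ s t : A, p = x * s + a * t ∧ q = y * t := by
    intro p q
    rw [← mem_range_gamma, Submodule.mkQ_apply, Submodule.Quotient.mk_eq_zero]
  have hrep : ∀ m : (Fin 2 → A) ⧸ R, ∃ p q : A, m = R.mkQ ![p, q] := by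
    intro m
    obtain ⟨v, rfl⟩ := R.mkQ_surjective m
    refine ⟨v 0, v 1, ?_⟩
    congr 1
    ext i
    fin_cases i <;> rfl
  constructor
  · rw [injective_iff_map_eq_zero]
    intro r hr
    have h1 : R.mkQ ![r, 0] = 0 := by
      have := LinearMap.congr_fun hr (R.mkQ ![1, 0])
      rw [Module.algebraMap_end_apply, ← map_smul] at this
      simpa using this
    have h2 : R.mkQ ![0, r] = 0 := by
      have := LinearMap.congr_fun hr (R.mkQ ![0, 1])
      rw [Module.algebraMap_end_apply, ← map_smul] at this
      simpa using this
    obtain ⟨s, t, e1, e2⟩ := (hmem _ _).1 h1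
    obtain ⟨s', t', e3, e4⟩ := (hmem _ _).1 h2
    obtain ⟨k, rfl⟩ := hy' t (by rw [mul_comm]; exact e2.symm)
    exact hreg' (s + a * k) t' r (by rw [e1]; ring) e4
  · intro f
    obtain ⟨p, q, h1⟩ := hrep (f (R.mkQ ![1, 0]))
    obtain ⟨r, s, h2⟩ := hrep (f (R.mkQ ![0, 1]))
    have r1 : R.mkQ ![x * p, x * q] = 0 := by
      have : R.mkQ ![x, 0] = 0 := (hmem _ _).2 ⟨1, 0, by ring, by ring⟩
      have e : R.mkQ ![x, 0] = x • R.mkQ ![1, 0] := by rw [← map_smul]; simp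
      have e' : R.mkQ ![x * p, x * q] = x • R.mkQ ![p, q] := by rw [← map_smul]; simp
      rw [e', ← h1, ← map_smul, ← e, this, map_zero]
    have r2 : R.mkQ ![a * p + y * r, a * q + y * s] = 0 := by
      have : R.mkQ ![a, y] = 0 := (hmem _ _).2 ⟨0, 1, by ring, by ring⟩
      have e : R.mkQ ![a, y] = a • R.mkQ ![1, 0] + y • R.mkQ ![0, 1] := by
        rw [← map_smul, ← map_smul, ← map_add]; simp
      have e' : R.mkQ ![a * p + y * r, a * q + y * s]
          = a • R.mkQ ![p, q] + y • R.mkQ ![r, s] := by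
        rw [← map_smul, ← map_smul, ← map_add]; simp
      rw [e', ← h1, ← h2, ← map_smul f, ← map_smul f, ← map_add, ← e, this, map_zero]
    obtain ⟨u1, t1, e1, e2⟩ := (hmem _ _).1 r1
    obtain ⟨u2, t2, e3, e4⟩ := (hmem _ _).1 r2
    have hq := hreg' q t1 (x * q) rfl e2
    obtain ⟨q', rfl⟩ := hx' q (by rw [mul_comm]; exact hq)
    obtain ⟨w, hw⟩ := hy' (t2 - s - a * q') (by linear_combination -e4)
    obtain ⟨b, c, hbc⟩ := ha' (p - a * q' - s) (u2 + a * w) (-r)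
      (by linear_combination e3 + a * hw)
    have h3 : y * (r + a * c) = 0 := by
      apply hreg' (u2 + a * w - a * b) (r + a * c) _ _ rfl
      linear_combination e3 + a * hw - a * hbc
    obtain ⟨r', hr'⟩ := hy' (r + a * c) (by rw [mul_comm]; exact h3)
    refine ⟨s + y * c, ?_⟩
    have k1 : f (R.mkQ ![1, 0]) = (s + y * c) • R.mkQ ![1, 0] := by
      rw [h1, ← sub_eq_zero, ← map_smul, ← map_sub]
      have : (![p, y * q'] - (s + y * c) • ![1, 0] : Fin 2 → A)
          = ![p - (s + y * c), y * q'] := by simp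
      rw [this, hmem]
      exact ⟨b, q', by linear_combination hbc, rfl⟩
    have k2 : f (R.mkQ ![0, 1]) = (s + y * c) • R.mkQ ![0, 1] := by
      rw [h2, ← sub_eq_zero, ← map_smul, ← map_sub]
      have : (![r, s] - (s + y * c) • ![0, 1] : Fin 2 → A)
          = ![r, - (y * c)] := by simp
      rw [this, hmem]
      exact ⟨r', -c, by linear_combination hr', by ring⟩
    refine LinearMap.ext fun m => ?_
    obtain ⟨m0, m1, rfl⟩ := hrep m
    have e : R.mkQ ![m0, m1] = m0 • R.mkQ ![1, 0] + m1 • R.mkQ ![0, 1] := by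
      rw [← map_smul, ← map_smul, ← map_add]; simp
    rw [Module.algebraMap_end_apply, e, map_add, map_smul, map_smul, k1, k2, smul_add,
      smul_comm m0, smul_comm m1]

theorem conseq_of_bij {A : Type*} [CommRing A] [IsNoetherianRing A] [IsLocalRing A]
    {M : Type*} [AddCommGroup M] [Module A M]
    (h : Function.Bijective (algebraMap A (Module.End A M))) :
    (∀ f g : Module.End A M, f * g = g * f) ∧ IsNoetherianRing (Module.End A M) ∧
      IsLocalRing (Module.End A M) ∧ IsIndecomposableModule A M := by
  refine ⟨?_, ?_, ?_, ?_, ?_⟩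
  · intro f g
    obtain ⟨r, rfl⟩ := h.2 f
    exact Algebra.commutes r g
  · exact isNoetherianRing_of_surjective A _ (algebraMap A (Module.End A M)) h.2
  · exact (RingEquiv.ofBijective _ h).isLocalRing
  · by_contra! hc
    apply one_ne_zero (α := A)
    apply h.1
    ext m
    rw [hc (algebraMap A (Module.End A M) 1 m), hc (algebraMap A (Module.End A M) 0 m)]
  · intro N P hNP
    obtain ⟨r, hr⟩ := h.2 (N.projection P hNP)
    rcases IsLocalRing.isUnit_or_isUnit_one_sub_self r with hu | hu
    · right
      rw [eq_bot_iff]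
      intro m hm
      have := LinearMap.congr_fun hr m
      rw [Module.algebraMap_end_apply,
        (Submodule.projection_apply_eq_zero_iff hNP).2 hm] at this
      exact (hu.smul_eq_zero).1 this
    · left
      rw [eq_bot_iff]
      intro m hm
      have := LinearMap.congr_fun hr m
      rw [Module.algebraMap_end_apply,
        Submodule.projection_apply_of_mem_left hNP hm] at this
      apply (hu.smul_eq_zero).1
      rw [sub_smul, one_smul, this]
      exact sub_self m

/-- **Theorem (4.5).** Let `x, y` be a regular exact pair of zero divisors and
let `a ∈ A` be weakly regular on `A/(x, y)`. Then the canonical `A`-algebra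
maps `A → End_A(G_a)` and `A → End_A(H_a)` are isomorphisms; in particular the
endomorphism rings are commutative, noetherian and local, and `G_a`, `H_a` are
indecomposable. -/
theorem end_G_H_eq_A {A : Type*} [CommRing A] [IsNoetherianRing A]
    [IsLocalRing A] {x y : A} (hxy : IsExactZeroDivisorPair x y)
    (hreg : Ideal.span ({x} : Set A) ⊓ Ideal.span ({y} : Set A) = ⊥) {a : A}
    (ha : Function.Injective
      fun m : A ⧸ Ideal.span ({x, y} : Set A) => a • m) :
    Function.Bijective (algebraMap A (Module.End A (Gmod x y a))) ∧
    Function.Bijective (algebraMap A (Module.End A (Hmod x y a))) ∧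
    (∀ f g : Module.End A (Gmod x y a), f * g = g * f) ∧
    (∀ f g : Module.End A (Hmod x y a), f * g = g * f) ∧
    IsNoetherianRing (Module.End A (Gmod x y a)) ∧
    IsNoetherianRing (Module.End A (Hmod x y a)) ∧
    IsLocalRing (Module.End A (Gmod x y a)) ∧
    IsLocalRing (Module.End A (Hmod x y a)) ∧
    IsIndecomposableModule A (Gmod x y a) ∧
    IsIndecomposableModule A (Hmod x y a) := by
  have hG := G_bijective hxy hreg ha
  have hH : Function.Bijective (algebraMap A (Module.End A (Hmod x y a))) := by
    refine G_bijective (x := y) (y := x) (a := -a)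
      ⟨hxy.2.1, hxy.1, hxy.2.2.2, hxy.2.2.1⟩ (by rw [inf_comm]; exact hreg) ?_
    rw [Set.pair_comm y x]
    intro m n hmn
    apply ha
    simpa using hmn
  obtain ⟨g1, g2, g3, g4⟩ := conseq_of_bij hG
  obtain ⟨h1, h2, h3, h4⟩ := conseq_of_bij hH
  exact ⟨hG, hH, g1, h1, g2, h2, g3, h3, g4, h4⟩
end
end

section
/- Let A be a commutative noetherian local ring, let x, y ∈ A be a regular exact pair of zero divisors, and let (b_n)_{n ≥ 1} be a sequence of elements of A, each regular on the A-module A/(x, y). Define a_n = b_1 ⋯ b_n. Then the A-modules G_{a_1}, G_{a_2}, G_{a_3}, … , H_{a_1}, H_{a_2}, H_{a_3}, … are all indecomposable, non-free, totally reflexive, and pairwise non-isomorphic. Furthermore, for all m, n ≥ 1 there are A-module isomorphisms Hom_A(H_{a_m}, G_{a_n}) ≅ G_{a_m a_n}, Hom_A(G_{a_m}, H_{a_n}) ≅ H_{a_m a_n}, and Hom_A(G_{a_m}, G_{a_n}) ≅ Hom_A(H_{a_n}, H_{a_m}) ≅ H_{b_{n+1} ⋯ b_m} if m ≥ n and ≅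 G_{b_{m+1} ⋯ b_n} if m ≤ n (where an empty product is 1). -/
/-!
Formalization of results from "Construction of totally reflexive modules
from an exact pair of zero divisors" by Henrik Holm.
-/

noncomputable section

universe u

open CategoryTheory in
/-- A finitely generated `A`-module `G` is *totally reflexive* if
`Ext_A^i(G, A) = 0` and `Ext_A^i(Hom_A(G, A), A) = 0` for all `i > 0`, and the
biduality map `G → Hom_A(Hom_A(G, A), A)` is an isomorphism. -/
def IsTotallyReflexive (A : Type u) [CommRing A] (M : Type u)
    [AddCommGroup M] [Module A M] : Prop :=
  Module.Finite A M ∧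
  (∀ i : ℕ, 0 < i → Subsingleton
    (((Ext A (ModuleCat A) i).obj (Opposite.op (ModuleCat.of A M))).obj
      (ModuleCat.of A A))) ∧
  (∀ i : ℕ, 0 < i → Subsingleton
    (((Ext A (ModuleCat A) i).obj
      (Opposite.op (ModuleCat.of A (Module.Dual A M)))).obj (ModuleCat.of A A))) ∧
  Function.Bijective (Module.Dual.eval A M)

open CategoryTheory in
theorem ext_vanish {A : Type u} [CommRing A] {F M : Type u} [AddCommGroup F] [Module A F]
    [Module.Projective A F]
    [AddCommGroup M] [Module A M] (f g : F →ₗ[A] F) (p : F →ₗ[A] M)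
    (hfg : Function.Exact f g) (hgf : Function.Exact g f) (hp : Function.Exact g p)
    (hs : Function.Surjective p)
    (hf : ∀ φ : F →ₗ[A] A, φ ∘ₗ f = 0 → ∃ ψ : F →ₗ[A] A, φ = ψ ∘ₗ g)
    (hg : ∀ φ : F →ₗ[A] A, φ ∘ₗ g = 0 → ∃ ψ : F →ₗ[A] A, φ = ψ ∘ₗ f) (i : ℕ) (hi : 0 < i) :
    Subsingleton
    (((Ext A (ModuleCat A) i).obj (Opposite.op (ModuleCat.of A M))).obj
      (ModuleCat.of A A)) := by
  have h1 : ModuleCat.ofHom f ≫ ModuleCat.ofHom g = 0 := by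
    ext v; exact hfg.apply_apply_eq_zero v
  have h2 : ModuleCat.ofHom g ≫ ModuleCat.ofHom f = 0 := by
    ext v; exact hgf.apply_apply_eq_zero v
  have h3 : ModuleCat.ofHom g ≫ ModuleCat.ofHom p = 0 := by
    ext v; exact hp.apply_apply_eq_zero v
  let K : ChainComplex (ModuleCat A) ℕ :=
    HomologicalComplex.alternatingConst (ModuleCat.of A F) h1 h2
    fun _ _ => ComplexShape.down_nat_odd_add
  have dodd : ∀ n, Odd (n+1) → K.d (n+1) n = ModuleCat.ofHom g := by
    intro n hn
    have : ¬ Even (n+1) := Nat.not_even_iff_odd.2 hn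
    simp [K, this]
    rfl
  have deven : ∀ n, Even (n+1) → K.d (n+1) n = ModuleCat.ofHom f := by
    intro n hn
    simp [K, hn]
    rfl
  let π : K ⟶ (ChainComplex.single₀ (ModuleCat A)).obj (ModuleCat.of A M) :=
    (K.toSingle₀Equiv _).symm ⟨ModuleCat.ofHom p, by
      rw [dodd 0 (by simp)]; exact h3⟩
  have hπ : QuasiIso π := by
    refine ⟨fun n => ?_⟩
    cases n with
    | zero =>
      rw [ChainComplex.quasiIsoAt₀_iff, ShortComplex.quasiIso_iff_of_zeros' _ rfl rfl rfl]
      constructor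
      · rw [ShortComplex.ShortExact.moduleCat_exact_iff_function_exact]
        have := dodd 0 (by simp)
        change Function.Exact (K.d 1 0) p
        rw [this]
        exact hp
      · rw [ModuleCat.epi_iff_surjective]
        exact hs
    | succ m =>
      rw [quasiIsoAt_iff_exactAt' (hL := ChainComplex.exactAt_succ_single_obj ..),
          HomologicalComplex.exactAt_iff' _ (m + 2) (m + 1) m (by simp) (by simp)]
      rw [ShortComplex.ShortExact.moduleCat_exact_iff_function_exact]
      rcases Nat.even_or_odd (m+1) with h | h
      · have a1 := dodd (m+1) (by simpa using h.add_one)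
        have a2 := deven m h
        change Function.Exact (K.d (m+1+1) (m+1)) (K.d (m+1) m)
        rw [a1, a2]
        exact hgf
      · have a1 := deven (m+1) (by simpa using h.add_one)
        have a2 := dodd m h
        change Function.Exact (K.d (m+1+1) (m+1)) (K.d (m+1) m)
        rw [a1, a2]
        exact hfg
  let P : ProjectiveResolution (ModuleCat.of A M) :=
    { complex := K
      projective := fun _ => inferInstanceAs (Projective (ModuleCat.of A F))
      π := π
      quasiIso := hπ }
  obtain ⟨m, rfl⟩ : ∃ m, i = m+1 := ⟨i-1, by omega⟩
  rw [← ModuleCat.isZero_iff_subsingleton]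
  refine Limits.IsZero.of_iso ?_ (P.isoExt (m + 1) _)
  rw [← HomologicalComplex.exactAt_iff_isZero_homology]
  rw [HomologicalComplex.exactAt_iff' _ m (m + 1) (m+2) (by simp) (by simp)]
  rw [ShortComplex.moduleCat_exact_iff]
  intro (φ : ModuleCat.of A F ⟶ ModuleCat.of A A) hφ
  have hφ' : K.d (m+2) (m+1) ≫ φ = 0 := hφ
  suffices ∃ ψ : ModuleCat.of A F ⟶ ModuleCat.of A A, K.d (m+1) m ≫ ψ = φ by
    obtain ⟨ψ, h⟩ := this
    exact ⟨ψ, h⟩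
  rcases Nat.even_or_odd (m+1) with h | h
  · rw [dodd (m+1) (by simpa using h.add_one)] at hφ'
    rw [deven m h]
    obtain ⟨ψ, hψ⟩ := hg φ.hom (by
      have := congrArg ModuleCat.Hom.hom hφ'
      exact this)
    exact ⟨ModuleCat.ofHom ψ, by ext v; exact (LinearMap.congr_fun hψ v).symm⟩
  · rw [deven (m+1) (by simpa using h.add_one)] at hφ'
    rw [dodd m h]
    obtain ⟨ψ, hψ⟩ := hf φ.hom (by
      have := congrArg ModuleCat.Hom.hom hφ'
      exact this)
    exact ⟨ModuleCat.ofHom ψ, by ext v; exact (LinearMap.congr_fun hψ v).symm⟩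
structure RP {A : Type*} [CommRing A] (x y : A) : Prop where
  h0 : x * y = 0
  hx : ∀ t, x * t = 0 → ∃ s, t = y * s
  hy : ∀ t, y * t = 0 → ∃ s, t = x * s
  hd : ∀ s t, x * s = y * t → x * s = 0
  nx : ¬ IsUnit x
  ny : ¬ IsUnit y

def Rg {A : Type*} [CommRing A] (x y a : A) : Prop :=
  ∀ t p q, a * t = x * p + y * q → ∃ u v, t = x * u + y * v

section alg
variable {A : Type*} [CommRing A] {x y : A}

theorem RP.symm (h : RP x y) : RP y x where
  h0 := by rw [mul_comm]; exact h.h0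
  hx := h.hy
  hy := h.hx
  hd := fun s t e => by rw [e]; exact h.hd t s e.symm
  nx := h.ny
  ny := h.nx

theorem Rg.symm {a : A} (h : Rg x y a) : Rg y x a := by
  intro t p q e
  obtain ⟨u, v, r⟩ := h t q p (by rw [e, add_comm])
  exact ⟨v, u, by rw [r, add_comm]⟩

theorem Rg.neg {a : A} (h : Rg x y a) : Rg x y (-a) := by
  intro t p q e
  exact h t (-p) (-q) (by linear_combination -e)

theorem Rg.one : Rg x y 1 := fun t p q e => ⟨p, q, by linear_combination e⟩

theorem Rg.mul {a b : A} (ha : Rg x y a) (hb : Rg x y b) : Rg x y (a * b) := by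
  intro t p q e
  obtain ⟨u, v, r⟩ := ha (b * t) p q (by rw [← e, mul_assoc])
  exact hb t u v r

theorem Rg.prod {b : ℕ → A} (hb : ∀ n, Rg x y (b n)) (s : Finset ℕ) :
    Rg x y (∏ i ∈ s, b i) := by
  classical
  induction s using Finset.induction_on with
  | empty => simpa using Rg.one
  | insert i s his ih => rw [Finset.prod_insert his]; exact (hb i).mul ih

variable [IsNoetherianRing A] [IsLocalRing A]

theorem RP.reg_y (h : RP x y) {a : A} (ha : Rg x y a) {t q : A} (e : a * t = y * q) :
    ∃ v, t = y * v := by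
  let N : Ideal A :=
    { carrier := {t | ∃ q, a * t = y * q}
      zero_mem' := ⟨0, by simp⟩
      add_mem' := by
        rintro s t ⟨p, hp⟩ ⟨q, hq⟩
        exact ⟨p + q, by linear_combination hp + hq⟩
      smul_mem' := by
        rintro c t ⟨q, hq⟩
        exact ⟨c * q, by simp only [smul_eq_mul]; linear_combination c * hq⟩ }
  have key : N ≤ Ideal.span {y} ⊔ Ideal.span {x} • N := by
    rintro t ⟨q, hq⟩
    obtain ⟨u, v, rfl⟩ := ha t 0 q (by rw [hq]; ring)
    have h1 := h.hd (a * u) (q - a * v) (by linear_combination hq)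
    obtain ⟨s, hs⟩ := h.hx _ h1
    rw [add_comm]
    refine Submodule.add_mem_sup (Ideal.mem_span_singleton'.2 ⟨v, mul_comm _ _⟩) ?_
    exact Submodule.smul_mem_smul (Ideal.mem_span_singleton_self x) ⟨s, hs⟩
  have := Submodule.le_of_le_smul_of_le_jacobson_bot (IsNoetherian.noetherian N)
    (I := Ideal.span {x}) (by
      rw [IsLocalRing.jacobson_eq_maximalIdeal _ bot_ne_top, Ideal.span_singleton_le_iff_mem]
      exact h.nx) key
  obtain ⟨v, hv⟩ := Ideal.mem_span_singleton'.1 (this ⟨q, e⟩)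
  exact ⟨v, by rw [← hv, mul_comm]⟩

theorem RP.reg (h : RP x y) {a : A} (ha : Rg x y a) {t : A} (e : a * t = 0) : t = 0 := by
  obtain ⟨v, hv⟩ := h.reg_y ha (t := t) (q := 0) (by simpa using e)
  obtain ⟨u, hu⟩ := h.symm.reg_y ha.symm (t := t) (q := 0) (by simpa using e)
  rw [hu]
  exact h.hd u v (by rw [← hu, hv])

theorem RP.inj (h : RP x y) {a : A} (ha : Rg x y a) {s t : A} (e : a * s = a * t) : s = t := by
  apply sub_eq_zero.1
  exact h.reg ha (by rw [mul_sub, e, sub_self])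

/-- hom from H_a to G_c -/
theorem RP.c1 (h : RP x y) {a c : A} (ha : Rg x y a) (hc : Rg x y c) (z : A) :
    (z ∈ Ideal.span {y, c} ∧ ∃ j ∈ Ideal.span {y, c}, x * z = a * j) ↔
      ∃ w ∈ Ideal.span {y, a * c}, z = 1 * w := by
  have h0 := h.h0
  simp only [Ideal.mem_span_pair]
  constructor
  · rintro ⟨⟨s, t, rfl⟩, j, ⟨p, q, rfl⟩, e⟩
    obtain ⟨r, hr⟩ := h.reg_y hc (t := x * t - a * q) (q := a * p)
      (by linear_combination e - s * h0)
    obtain ⟨q1, q2, rfl⟩ := ha q t (-r) (by linear_combination -hr)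
    obtain ⟨g, hg⟩ := h.hx _ (h.hd (t - a * q1) (r + a * q2) (by linear_combination hr))
    refine ⟨_, ⟨s + g * c, q1, rfl⟩, ?_⟩
    linear_combination c * hg
  · rintro ⟨_, ⟨s, t, rfl⟩, rfl⟩
    refine ⟨⟨s, t * a, by ring⟩, _, ⟨0, x * t, rfl⟩, ?_⟩
    linear_combination s * h0

theorem RP.c2 (h : RP x y) {a d : A} (ha : Rg x y a) (hd : Rg x y d) (z : A) :
    (z ∈ Ideal.span {y, a * d} ∧ ∃ j ∈ Ideal.span {y, a * d}, y * z = a * j) ↔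
      ∃ w ∈ Ideal.span {y, d}, z = a * w := by
  have h0 := h.h0
  simp only [Ideal.mem_span_pair]
  constructor
  · rintro ⟨⟨s, t, rfl⟩, j, ⟨p, q, rfl⟩, e⟩
    obtain ⟨q', rfl⟩ := h.reg_y ((ha.mul ha).mul hd) (t := q) (q := y * s + t * a * d - a * p)
      (by linear_combination -e)
    obtain ⟨r, hr⟩ := h.hy (y * s + a * d * t - a * p - a * a * d * q')
      (by linear_combination e)
    obtain ⟨u, v, huv⟩ := ha (p + a * d * q' - d * t) (-r) s (by linear_combination -hr)
    have h2 := h.hd (r + a * u) (s - a * v) (by linear_combination -hr - a * huv)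
    obtain ⟨g, hg⟩ := h.hy (s - a * v) (by linear_combination h2 + hr + a * huv)
    refine ⟨_, ⟨v, t, rfl⟩, ?_⟩
    linear_combination y * hg + g * h0
  · rintro ⟨_, ⟨s, t, rfl⟩, rfl⟩
    exact ⟨⟨s * a, t, by ring⟩, _, ⟨y * s + t * d, 0, rfl⟩, by ring⟩

theorem RP.c3 (h : RP x y) {c d : A} (hc : Rg x y c) (hd : Rg x y d) (z : A) :
    (z ∈ Ideal.span {y, c} ∧ ∃ j ∈ Ideal.span {y, c}, y * z = (c * d) * j) ↔
      ∃ w ∈ Ideal.span {x, d}, z = c * w := by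
  have h0 := h.h0
  simp only [Ideal.mem_span_pair]
  constructor
  · rintro ⟨⟨s, t, rfl⟩, j, ⟨p, q, rfl⟩, e⟩
    obtain ⟨q', rfl⟩ := h.reg_y ((hc.mul hd).mul hc) (t := q) (q := y * s + t * c - c * d * p)
      (by linear_combination -e)
    obtain ⟨r, hr⟩ := h.hy (y * s + c * t - c * d * p - c * d * c * q')
      (by linear_combination e)
    obtain ⟨u, v, huv⟩ := hc (t - d * (p + c * q')) r (-s) (by linear_combination hr)
    have h2 := h.hd (r - c * u) (s + c * v) (by linear_combination -hr + c * huv)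
    obtain ⟨g, hg⟩ := h.hy (s + c * v) (by linear_combination h2 + hr - c * huv)
    refine ⟨_, ⟨u, p + c * q', rfl⟩, ?_⟩
    linear_combination y * hg + g * h0 + c * huv
  · rintro ⟨_, ⟨s, t, rfl⟩, rfl⟩
    refine ⟨⟨0, s * x + t * d, by ring⟩, _, ⟨t, 0, rfl⟩, ?_⟩
    linear_combination s * c * h0

end alg

section homs
variable {A : Type*} [CommRing A]

theorem hom_comm {I J : Ideal A} (φ : I →ₗ[A] J) (i j : I) :
    (i : A) * (φ j : A) = (j : A) * (φ i : A) := by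
  have : φ ((i : A) • j) = φ ((j : A) • i) := by
    congr 1; ext; simp [mul_comm]
  rw [map_smul, map_smul] at this
  exact congrArg Subtype.val this

theorem dual_comm {I : Ideal A} (φ : I →ₗ[A] A) (i j : I) :
    (i : A) * (φ j : A) = (j : A) * (φ i : A) := by
  have : φ ((i : A) • j) = φ ((j : A) • i) := by
    congr 1; ext; simp [mul_comm]
  rwa [map_smul, map_smul] at this

theorem exists_hom {I J : Ideal A} {a z : A} (ha : ∀ s t, a * s = a * t → s = t)
    (hz : ∀ i ∈ I, ∃ j ∈ J, i * z = a * j) : ∃ φ : I →ₗ[A] J, ∀ i, a * (φ i : A) = i * z := by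
  choose! f hf hf' using hz
  exact ⟨{ toFun := fun i => ⟨f i, hf i i.2⟩
           map_add' := fun i j => by
            ext; apply ha
            simp only [Submodule.coe_add, mul_add]
            rw [← hf' _ i.2, ← hf' _ j.2, ← hf' _ (I.add_mem i.2 j.2)]; ring
           map_smul' := fun r i => by
            ext; apply ha
            simp only [Submodule.coe_smul, smul_eq_mul, RingHom.id_apply]
            rw [← hf' _ (I.mul_mem_left r i.2), mul_left_comm, ← hf' _ i.2]; ring },
    fun i => (hf' _ i.2).symm⟩

def ev (I J : Ideal A) (a : I) : (I →ₗ[A] J) →ₗ[A] A :=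
  J.subtype ∘ₗ LinearMap.applyₗ a

theorem ev_apply (I J : Ideal A) (a : I) (φ : I →ₗ[A] J) : ev I J a φ = φ a := rfl

theorem ev_inj {I J : Ideal A} {a : I} (ha : ∀ s t : A, a * s = a * t → s = t) :
    Function.Injective (ev I J a) := by
  intro φ ψ e
  rw [ev_apply, ev_apply] at e
  ext i
  apply ha
  rw [hom_comm φ, hom_comm ψ, e]

theorem a_mem (u a : A) : a ∈ Ideal.span {u, a} := Ideal.subset_span (by simp)
theorem u_mem (u a : A) : u ∈ Ideal.span {u, a} := Ideal.subset_span (by simp)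

theorem mem_ev {u a : A} {J : Ideal A} (ha : ∀ s t : A, a * s = a * t → s = t) (z : A) :
    z ∈ LinearMap.range (ev (Ideal.span {u, a}) J ⟨a, a_mem u a⟩) ↔
     (z ∈ J ∧ ∃ j ∈ J, u * z = a * j) := by
  constructor
  · rintro ⟨φ, rfl⟩
    refine ⟨(φ _).2, φ ⟨u, u_mem u a⟩, (φ _).2, ?_⟩
    exact hom_comm φ ⟨u, u_mem u a⟩ ⟨a, a_mem u a⟩
  · rintro ⟨hz, j, hj, e⟩
    obtain ⟨φ, hφ⟩ := exists_hom (I := Ideal.span {u, a}) (J := J) ha (z := z) (by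
      intro i hi
      obtain ⟨p, q, rfl⟩ := Ideal.mem_span_pair.1 hi
      exact ⟨p * j + q * z, J.add_mem (J.mul_mem_left _ hj) (J.mul_mem_left _ hz), by
        linear_combination p * e⟩)
    exact ⟨φ, ha _ _ (hφ ⟨a, a_mem u a⟩)⟩

theorem homEquiv {u a k : A} {J K : Ideal A} (ha : ∀ s t : A, a * s = a * t → s = t)
    (hk : ∀ s t : A, k * s = k * t → s = t)
    (h : ∀ z, (z ∈ J ∧ ∃ j ∈ J, u * z = a * j) ↔ ∃ w ∈ K, z = k * w) :
    Nonempty ((Ideal.span {u, a} →ₗ[A] J) ≃ₗ[A] K) := by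
  let g : K →ₗ[A] A := k • K.subtype
  have hg : Function.Injective g := fun s t e => Subtype.ext (hk _ _ e)
  have hr : LinearMap.range (ev (Ideal.span {u, a}) J ⟨a, a_mem u a⟩) = LinearMap.range g := by
    ext z
    rw [mem_ev ha, h]
    constructor
    · rintro ⟨w, hw, rfl⟩; exact ⟨⟨w, hw⟩, rfl⟩
    · rintro ⟨⟨w, hw⟩, rfl⟩; exact ⟨w, hw, rfl⟩
  exact ⟨(LinearEquiv.ofInjective _ (ev_inj ha)).trans
    ((LinearEquiv.ofEq _ _ hr).trans (LinearEquiv.ofInjective g hg).symm)⟩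

/-- value of a homomorphism -/
theorem hom_val {u a k : A} {J K : Ideal A} (ha : ∀ s t : A, a * s = a * t → s = t)
    (h : ∀ z, (z ∈ J ∧ ∃ j ∈ J, u * z = a * j) ↔ ∃ w ∈ K, z = k * w)
    (φ : Ideal.span {u, a} →ₗ[A] J) : ∃ w ∈ K, (φ ⟨a, a_mem u a⟩ : A) = k * w := by
  rw [← h, ← mem_ev ha]
  exact ⟨φ, rfl⟩

theorem indec_of_scalar [IsLocalRing A] {M : Type*} [AddCommGroup M] [Module A M]
    (h0 : ∃ m : M, m ≠ 0) (h : ∀ φ : M →ₗ[A] M, ∃ r : A, ∀ m, φ m = r • m) :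
    IsIndecomposableModule A M := by
  refine ⟨h0, fun N P hNP => ?_⟩
  obtain ⟨r, hr⟩ := h (N.projection P hNP)
  rcases IsLocalRing.isUnit_or_isUnit_one_sub_self r with hu | hu
  · right
    rw [eq_bot_iff]
    intro p hp
    have := hr p
    rw [Submodule.projection_apply_eq_zero_iff hNP |>.2 hp] at this
    exact (hu.smul_eq_zero).1 this.symm
  · left
    rw [eq_bot_iff]
    intro p hp
    have := hr p
    rw [Submodule.projection_apply_left hNP ⟨p, hp⟩] at this
    refine (hu.smul_eq_zero).1 ?_
    rw [sub_smul, one_smul]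
    exact sub_eq_zero.2 this

theorem free_ideal [Nontrivial A] (I : Ideal A) (hI : ∃ i ∈ I, i ≠ 0) (h : Module.Free A I) :
    Nonempty (I ≃ₗ[A] A) := by
  classical
  let b := Module.Free.chooseBasis A I
  have hs : Subsingleton (Module.Free.ChooseBasisIndex A I) := by
    refine ⟨fun i j => ?_⟩
    by_contra hij
    have e : (b j : A) • b i = (b i : A) • b j := by ext; simp [mul_comm]
    have := DFunLike.congr_fun (congrArg b.repr e) i
    simp [Ne.symm hij] at this
    exact b.ne_zero j this
  have hn : Nonempty (Module.Free.ChooseBasisIndex A I) := by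
    by_contra hne
    rw [not_nonempty_iff] at hne
    obtain ⟨i, hi, h0⟩ := hI
    have : (⟨i, hi⟩ : I) = 0 := b.repr.injective (Subsingleton.elim _ _)
    exact h0 (congrArg Subtype.val this)
  obtain ⟨i⟩ := hn
  have : Unique (Module.Free.ChooseBasisIndex A I) := uniqueOfSubsingleton i
  exact ⟨b.repr.trans (Finsupp.uniqueLinearEquiv A A i)⟩

end homs
section mods
variable {A : Type u} [CommRing A] {x y : A}

theorem gamma_apply (x y a : A) (v : Fin 2 → A) :
    Matrix.toLin' (gammaMat x y a) v = ![x * v 0 + a * v 1, y * v 1] := by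
  ext i; fin_cases i <;> simp [gammaMat, Matrix.mulVec, dotProduct, Fin.sum_univ_two]

theorem eta_apply (x y a : A) (v : Fin 2 → A) :
    Matrix.toLin' (etaMat x y a) v = ![y * v 0 - a * v 1, x * v 1] := by
  ext i; fin_cases i <;>
    simp [etaMat, Matrix.mulVec, dotProduct, Fin.sum_univ_two, sub_eq_add_neg]

theorem eta_eq (x y a : A) : etaMat x y a = gammaMat y x (-a) := rfl

theorem gamma_eq (x y a : A) : gammaMat x y a = etaMat y x (-a) := by
  simp [etaMat, gammaMat]

theorem exact_eta_gamma (h : RP x y) (a : A) :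
    Function.Exact (Matrix.toLin' (etaMat x y a)) (Matrix.toLin' (gammaMat x y a)) := by
  have h0 := h.h0
  intro v
  rw [gamma_apply]
  constructor
  · intro e
    have e0 : x * v 0 + a * v 1 = 0 := congrFun e 0
    have e1 : y * v 1 = 0 := congrFun e 1
    obtain ⟨t, ht⟩ := h.hy _ e1
    obtain ⟨s, hs⟩ := h.hx (v 0 + a * t) (by rw [ht] at e0; linear_combination e0)
    refine ⟨![s, t], ?_⟩
    rw [eta_apply]
    ext i; fin_cases i
    · simp; linear_combination -hs
    · simp [ht]
  · rintro ⟨w, rfl⟩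
    rw [eta_apply]
    ext i; fin_cases i
    · simp; linear_combination w 0 * h0
    · simp; linear_combination w 1 * h0

theorem dual_gamma (h : RP x y) (a : A) (φ : (Fin 2 → A) →ₗ[A] A)
    (e : φ ∘ₗ Matrix.toLin' (gammaMat x y a) = 0) :
    ∃ ψ : (Fin 2 → A) →ₗ[A] A, φ = ψ ∘ₗ Matrix.toLin' (etaMat x y a) := by
  have h0 := h.h0
  have hφ : ∀ p q, φ ![p, q] = p * φ ![1, 0] + q * φ ![0, 1] := by
    intro p q
    rw [← smul_eq_mul, ← smul_eq_mul, ← map_smul, ← map_smul, ← map_add]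
    simp
  have e0 := LinearMap.congr_fun e ![1, 0]
  have e1 := LinearMap.congr_fun e ![0, 1]
  rw [LinearMap.comp_apply, gamma_apply] at e0 e1
  rw [hφ] at e0 e1
  simp at e0 e1
  obtain ⟨s, hs⟩ := h.hx _ e0
  obtain ⟨t, ht⟩ := h.hy (a * s + φ ![0, 1]) (by rw [hs] at e1; linear_combination e1)
  refine ⟨s • LinearMap.proj 0 + t • LinearMap.proj 1, ?_⟩
  ext i
  fin_cases i
  · have : (Pi.single 0 1 : Fin 2 → A) = ![1, 0] := by
      ext j; fin_cases j <;> simp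
    simp only [Fin.zero_eta, LinearMap.comp_apply, LinearMap.coe_single, this, eta_apply]
    simp [hs, mul_comm]
  · have : (Pi.single 1 1 : Fin 2 → A) = ![0, 1] := by
      ext j; fin_cases j <;> simp
    simp only [Fin.mk_one, LinearMap.comp_apply, LinearMap.coe_single, this, eta_apply]
    simp
    linear_combination ht

theorem ext_G (h : RP x y) (a : A) {M : Type u} [AddCommGroup M] [Module A M]
    (e : Gmod x y a ≃ₗ[A] M) (i : ℕ) (hi : 0 < i) :
    Subsingleton (((Ext A (ModuleCat A) i).obj (Opposite.op (ModuleCat.of A M))).obj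
      (ModuleCat.of A A)) := by
  refine ext_vanish (Matrix.toLin' (etaMat x y a)) (Matrix.toLin' (gammaMat x y a))
    (e.toLinearMap ∘ₗ Submodule.mkQ _) (exact_eta_gamma h a) ?_ ?_ ?_ ?_ (dual_gamma h a) i hi
  · have := exact_eta_gamma h.symm (-a)
    rwa [← eta_eq, ← gamma_eq] at this
  · rw [LinearMap.exact_iff, LinearEquiv.ker_comp, Submodule.ker_mkQ]
  · exact e.surjective.comp (Submodule.mkQ_surjective _)
  · have := dual_gamma h.symm (-a)
    rwa [← eta_eq, ← gamma_eq] at this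

variable [IsNoetherianRing A] [IsLocalRing A]

theorem Gequiv (h : RP x y) {a : A} (ha : Rg x y a) :
    Nonempty (Gmod x y a ≃ₗ[A] Ideal.span {y, a}) := by
  have h0 := h.h0
  let p : (Fin 2 → A) →ₗ[A] Ideal.span {y, a} :=
    (LinearMap.proj 0).smulRight (⟨y, u_mem y a⟩ : Ideal.span {y, a}) -
     (LinearMap.proj 1).smulRight (⟨a, a_mem y a⟩ : Ideal.span {y, a})
  have hp : ∀ v, (p v : A) = v 0 * y - v 1 * a := fun v => rfl
  have hs : Function.Surjective p := by
    rintro ⟨z, hz⟩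
    obtain ⟨r, s, rfl⟩ := Ideal.mem_span_pair.1 hz
    exact ⟨![r, -s], by ext; rw [hp]; simp⟩
  have hk : LinearMap.range (Matrix.toLin' (gammaMat x y a)) = LinearMap.ker p := by
    ext v
    rw [LinearMap.mem_ker]
    constructor
    · rintro ⟨w, rfl⟩
      ext
      rw [hp, gamma_apply]
      simp
      linear_combination w 0 * h0
    · intro e
      have e1 : v 0 * y - v 1 * a = 0 := congrArg Subtype.val e
      obtain ⟨q, hq⟩ := h.reg_y ha (t := v 1) (q := v 0) (by linear_combination -e1)
      obtain ⟨r, hr⟩ := h.hy (v 0 - a * q) (by rw [hq] at e1; linear_combination e1)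
      refine ⟨![r, q], ?_⟩
      rw [gamma_apply]
      ext i; fin_cases i
      · simp; linear_combination -hr
      · simp [hq]
  exact ⟨(Submodule.quotEquivOfEq _ _ hk).trans (p.quotKerEquivOfSurjective hs)⟩

theorem span_neg (y a : A) : Ideal.span {y, -a} = Ideal.span {y, a} := by
  ext z
  simp only [Ideal.mem_span_pair]
  constructor
  · rintro ⟨p, q, rfl⟩; exact ⟨p, -q, by ring⟩
  · rintro ⟨p, q, rfl⟩; exact ⟨p, -q, by ring⟩

theorem Hequiv (h : RP x y) {a : A} (ha : Rg x y a) :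
    Nonempty (Hmod x y a ≃ₗ[A] Ideal.span {x, a}) := by
  have := Gequiv h.symm ha.symm.neg
  rw [span_neg] at this
  exact this

theorem homGG1 (h : RP x y) {a d : A} (ha : Rg x y a) (hd : Rg x y d) :
    Nonempty ((Gmod x y a →ₗ[A] Gmod x y (a * d)) ≃ₗ[A] Gmod x y d) := by
  obtain ⟨e1⟩ := Gequiv h ha
  obtain ⟨e2⟩ := Gequiv h (ha.mul hd)
  obtain ⟨e3⟩ := Gequiv h hd
  obtain ⟨e⟩ := homEquiv (fun _ _ => h.inj ha) (fun _ _ => h.inj ha) (h.c2 ha hd)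
  exact ⟨(LinearEquiv.arrowCongr e1 e2).trans (e.trans e3.symm)⟩

theorem homHH1 (h : RP x y) {a d : A} (ha : Rg x y a) (hd : Rg x y d) :
    Nonempty ((Hmod x y a →ₗ[A] Hmod x y (a * d)) ≃ₗ[A] Hmod x y d) := by
  obtain ⟨e1⟩ := Hequiv h ha
  obtain ⟨e2⟩ := Hequiv h (ha.mul hd)
  obtain ⟨e3⟩ := Hequiv h hd
  obtain ⟨e⟩ := homEquiv (fun _ _ => h.inj ha) (fun _ _ => h.inj ha) (h.symm.c2 ha.symm hd.symm)
  exact ⟨(LinearEquiv.arrowCongr e1 e2).trans (e.trans e3.symm)⟩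

theorem homGG2 (h : RP x y) {c d : A} (hc : Rg x y c) (hd : Rg x y d) :
    Nonempty ((Gmod x y (c * d) →ₗ[A] Gmod x y c) ≃ₗ[A] Hmod x y d) := by
  obtain ⟨e1⟩ := Gequiv h (hc.mul hd)
  obtain ⟨e2⟩ := Gequiv h hc
  obtain ⟨e3⟩ := Hequiv h hd
  obtain ⟨e⟩ := homEquiv (fun _ _ => h.inj (hc.mul hd)) (fun _ _ => h.inj hc) (h.c3 hc hd)
  exact ⟨(LinearEquiv.arrowCongr e1 e2).trans (e.trans e3.symm)⟩

theorem homHH2 (h : RP x y) {c d : A} (hc : Rg x y c) (hd : Rg x y d) :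
    Nonempty ((Hmod x y (c * d) →ₗ[A] Hmod x y c) ≃ₗ[A] Gmod x y d) := by
  obtain ⟨e1⟩ := Hequiv h (hc.mul hd)
  obtain ⟨e2⟩ := Hequiv h hc
  obtain ⟨e3⟩ := Gequiv h hd
  obtain ⟨e⟩ := homEquiv (fun _ _ => h.inj (hc.mul hd)) (fun _ _ => h.inj hc)
    (h.symm.c3 hc.symm hd.symm)
  exact ⟨(LinearEquiv.arrowCongr e1 e2).trans (e.trans e3.symm)⟩

theorem homHG (h : RP x y) {a c : A} (ha : Rg x y a) (hc : Rg x y c) :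
    Nonempty ((Hmod x y a →ₗ[A] Gmod x y c) ≃ₗ[A] Gmod x y (a * c)) := by
  obtain ⟨e1⟩ := Hequiv h ha
  obtain ⟨e2⟩ := Gequiv h hc
  obtain ⟨e3⟩ := Gequiv h (ha.mul hc)
  obtain ⟨e⟩ := homEquiv (fun _ _ => h.inj ha) (fun s t => by simp) (h.c1 ha hc)
  exact ⟨(LinearEquiv.arrowCongr e1 e2).trans (e.trans e3.symm)⟩

theorem homGH (h : RP x y) {a c : A} (ha : Rg x y a) (hc : Rg x y c) :
    Nonempty ((Gmod x y a →ₗ[A] Hmod x y c) ≃ₗ[A] Hmod x y (a * c)) := by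
  obtain ⟨e1⟩ := Gequiv h ha
  obtain ⟨e2⟩ := Hequiv h hc
  obtain ⟨e3⟩ := Hequiv h (ha.mul hc)
  obtain ⟨e⟩ := homEquiv (fun _ _ => h.inj ha) (fun s t => by simp) (h.symm.c1 ha.symm hc.symm)
  exact ⟨(LinearEquiv.arrowCongr e1 e2).trans (e.trans e3.symm)⟩

theorem oneEquiv (y : A) : Nonempty (A ≃ₗ[A] Ideal.span {y, (1 : A)}) := by
  have : Ideal.span {y, (1 : A)} = ⊤ := (Ideal.eq_top_iff_one _).2 (a_mem y 1)
  rw [this]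
  exact ⟨Submodule.topEquiv.symm⟩

theorem refl_ideal (h : RP x y) {a : A} (ha : Rg x y a) :
    Module.IsReflexive A (Ideal.span {y, a}) := by
  have h0 := h.h0
  constructor
  constructor
  · intro i j e
    have := LinearMap.congr_fun e (Submodule.subtype _)
    exact Subtype.ext this
  · intro Ψ
    let I : Ideal A := Ideal.span {y, a}
    let ι : I →ₗ[A] A := Submodule.subtype _
    obtain ⟨φ, hφ⟩ := exists_hom (I := I) (J := ⊤) (z := x) (fun _ _ => h.inj ha) (by
      intro i hi
      obtain ⟨p, q, rfl⟩ := Ideal.mem_span_pair.1 hi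
      exact ⟨q * x, trivial, by linear_combination p * h0⟩)
    let φx : I →ₗ[A] A := Submodule.subtype _ ∘ₗ φ
    have key : ∀ (θ : I →ₗ[A] A) z, (∀ i : I, a * θ i = i * z) → a * Ψ θ = z * Ψ ι := by
      intro θ z hθ
      have : a • θ = z • ι := by
        ext i
        simp only [LinearMap.smul_apply, smul_eq_mul, hθ]
        rw [mul_comm]; rfl
      rw [← smul_eq_mul, ← smul_eq_mul, ← map_smul, ← map_smul, this]
    have k1 := key φx x hφ
    obtain ⟨t, ht⟩ := h.symm.reg_y ha.symm k1
    obtain ⟨s, hs⟩ := h.hx (Ψ ι - a * t) (by rw [ht] at k1; linear_combination -k1)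
    have hm : Ψ ι ∈ I := Ideal.mem_span_pair.2 ⟨s, t, by linear_combination -hs⟩
    refine ⟨⟨Ψ ι, hm⟩, ?_⟩
    ext θ
    apply h.inj ha
    have k2 := key θ (θ ⟨a, a_mem y a⟩) (fun i => dual_comm θ ⟨a, a_mem y a⟩ i)
    rw [k2]
    rw [Module.Dual.eval_apply]
    rw [dual_comm θ ⟨a, a_mem y a⟩ ⟨Ψ ι, hm⟩, mul_comm]

theorem tr_G (h : RP x y) {a : A} (ha : Rg x y a) : IsTotallyReflexive A (Gmod x y a) := by
  refine ⟨inferInstance, ext_G h a (LinearEquiv.refl _ _), ?_, ?_⟩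
  · obtain ⟨e1⟩ := Gequiv h ha
    obtain ⟨e2⟩ := oneEquiv y
    obtain ⟨e3⟩ := Hequiv h ha
    have ha' : Rg x y (1 * a) := by rwa [one_mul]
    obtain ⟨e⟩ := homEquiv (fun _ _ => h.inj ha') (fun _ _ => h.inj Rg.one) (h.c3 Rg.one ha)
    rw [one_mul] at e
    have E : Module.Dual A (Gmod x y a) ≃ₗ[A] Hmod x y a :=
      (LinearEquiv.arrowCongr e1 e2).trans (e.trans e3.symm)
    exact ext_G h.symm (-a) (M := Module.Dual A (Gmod x y a)) E.symm
  · obtain ⟨e1⟩ := Gequiv h ha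
    have := refl_ideal h ha
    have := Module.equiv e1.symm
    exact Module.bijective_dual_eval A _

theorem tr_H (h : RP x y) {a : A} (ha : Rg x y a) : IsTotallyReflexive A (Hmod x y a) :=
  tr_G h.symm ha.symm.neg

theorem ne_zero_of_Rg (h : RP x y) {a : A} (ha : Rg x y a) : a ≠ 0 := by
  rintro rfl
  exact one_ne_zero (h.reg ha (t := 1) (by simp))

theorem indec_G (h : RP x y) {a : A} (ha : Rg x y a) :
    IsIndecomposableModule A (Gmod x y a) := by
  obtain ⟨e⟩ := Gequiv h ha
  apply indec_of_scalar
  · refine ⟨e.symm ⟨a, a_mem y a⟩, ?_⟩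
    rw [Ne, LinearEquiv.map_eq_zero_iff]
    intro h1
    exact ne_zero_of_Rg h ha (congrArg Subtype.val h1)
  · intro φ
    have c2 := h.c2 ha Rg.one
    rw [mul_one] at c2
    let θ : Ideal.span {y, a} →ₗ[A] Ideal.span {y, a} := LinearEquiv.arrowCongr e e φ
    obtain ⟨w, -, hw⟩ := hom_val (fun _ _ => h.inj ha) c2 θ
    refine ⟨w, fun m => e.injective ?_⟩
    have hθ : θ (e m) = e (φ m) := by simp [θ]
    rw [← hθ, map_smul]
    ext
    apply h.inj ha
    have := hom_comm θ ⟨a, a_mem y a⟩ (e m)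
    rw [hw] at this
    rw [this]
    simp only [Submodule.coe_smul, smul_eq_mul]
    ring

theorem indec_H (h : RP x y) {a : A} (ha : Rg x y a) :
    IsIndecomposableModule A (Hmod x y a) := indec_G h.symm ha.symm.neg

theorem one_sub_contra (h : RP x y) {d m : A} (hd : Rg x y d) (hm : ¬ IsUnit m)
    (e : d = d * m) : False := by
  have h1 := h.reg hd (t := 1 - m) (by linear_combination e)
  apply hm
  rw [← sub_eq_zero.1 h1]
  exact isUnit_one

theorem noniso_ideal (h : RP x y) {a d : A} (ha : Rg x y a) (hd : Rg x y d) (nd : ¬ IsUnit d)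
    (e : Ideal.span {y, a} ≃ₗ[A] Ideal.span {y, a * d}) : False := by
  have h0 := h.h0
  obtain ⟨w, hw, e1⟩ := hom_val (fun _ _ => h.inj ha) (h.c2 ha hd) e.toLinearMap
  obtain ⟨w', hw', e2⟩ := hom_val (fun _ _ => h.inj (ha.mul hd)) (h.c3 ha hd) e.symm.toLinearMap
  have e3 := hom_comm e.symm.toLinearMap ⟨a * d, a_mem y _⟩ (e ⟨a, a_mem y _⟩)
  simp only [LinearEquiv.coe_coe, LinearEquiv.symm_apply_apply] at e1 e2 e3
  rw [e1, e2] at e3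
  have e4 : d = w * w' := h.inj (ha.mul ha) (by linear_combination e3)
  obtain ⟨p, q, rfl⟩ := Ideal.mem_span_pair.1 hw
  obtain ⟨p', q', rfl⟩ := Ideal.mem_span_pair.1 hw'
  refine one_sub_contra h hd (m := p * q' * y + q * p' * x + q * q' * d) ?_
    (by linear_combination e4 + p * p' * h0)
  refine (IsLocalRing.mem_maximalIdeal _).1 ?_
  refine Ideal.add_mem _ (Ideal.add_mem _ ?_ ?_) ?_ <;> refine Ideal.mul_mem_left _ _ ?_
  · exact h.ny
  · exact h.nx
  · exact nd

theorem noniso_GG (h : RP x y) {a d : A} (ha : Rg x y a) (hd : Rg x y d) (nd : ¬ IsUnit d)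
    (e : Gmod x y a ≃ₗ[A] Gmod x y (a * d)) : False := by
  obtain ⟨e1⟩ := Gequiv h ha
  obtain ⟨e2⟩ := Gequiv h (ha.mul hd)
  exact noniso_ideal h ha hd nd (e1.symm.trans (e.trans e2))

theorem noniso_HH (h : RP x y) {a d : A} (ha : Rg x y a) (hd : Rg x y d) (nd : ¬ IsUnit d)
    (e : Hmod x y a ≃ₗ[A] Hmod x y (a * d)) : False := by
  obtain ⟨e1⟩ := Hequiv h ha
  obtain ⟨e2⟩ := Hequiv h (ha.mul hd)
  exact noniso_ideal h.symm ha.symm hd.symm nd (e1.symm.trans (e.trans e2))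

theorem nonfree_G (h : RP x y) {a : A} (ha : Rg x y a) (na : ¬ IsUnit a) :
    ¬ Module.Free A (Gmod x y a) := by
  intro hf
  obtain ⟨e1⟩ := Gequiv h ha
  obtain ⟨e⟩ := free_ideal (Ideal.span {y, a}) ⟨a, a_mem y a, ne_zero_of_Rg h ha⟩
    (Module.Free.of_equiv e1)
  obtain ⟨e2⟩ := oneEquiv y
  have E := e2.symm.trans e.symm
  have : Ideal.span {y, a} = Ideal.span {y, 1 * a} := by rw [one_mul]
  rw [this] at E
  exact noniso_ideal h Rg.one ha na E

theorem nonfree_H (h : RP x y) {a : A} (ha : Rg x y a) (na : ¬ IsUnit a) :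
    ¬ Module.Free A (Hmod x y a) :=
  nonfree_G h.symm ha.symm.neg (by rwa [IsUnit.neg_iff])

theorem noniso_GH (h : RP x y) {a c : A} (ha : Rg x y a) (hc : Rg x y c) (na : ¬ IsUnit a)
    (E : Gmod x y a ≃ₗ[A] Hmod x y c) : False := by
  have h0 := h.h0
  obtain ⟨f1⟩ := Gequiv h ha
  obtain ⟨f2⟩ := Hequiv h hc
  let e := f1.symm.trans (E.trans f2)
  obtain ⟨w, hw, e1⟩ := hom_val (fun _ _ => h.inj ha) (h.symm.c1 ha.symm hc.symm) e.toLinearMap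
  obtain ⟨w', hw', e2⟩ := hom_val (fun _ _ => h.inj hc) (h.c1 hc ha) e.symm.toLinearMap
  have e3 := hom_comm e.symm.toLinearMap ⟨c, a_mem x _⟩ (e ⟨a, a_mem y _⟩)
  simp only [LinearEquiv.coe_coe, LinearEquiv.symm_apply_apply] at e1 e2 e3
  rw [e1, e2] at e3
  obtain ⟨p, q, rfl⟩ := Ideal.mem_span_pair.1 hw
  obtain ⟨p', q', rfl⟩ := Ideal.mem_span_pair.1 hw'
  refine one_sub_contra h (ha.mul hc) (m := p * q' * x + q * p' * y + q * q' * c * a) ?_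
    (by linear_combination e3 + p * p' * h0)
  refine (IsLocalRing.mem_maximalIdeal _).1 ?_
  refine Ideal.add_mem _ (Ideal.add_mem _ ?_ ?_) ?_ <;> refine Ideal.mul_mem_left _ _ ?_
  · exact h.nx
  · exact h.ny
  · exact na

end mods

/-- **Theorem (6.1), the main theorem.** Let `x, y` be a regular exact pair of
zero divisors and let `(bₙ)` be a sequence of elements of `A` (indexed here by
`n = 0, 1, 2, …`), each regular on `A/(x, y)`.  With `aₙ = b₀ ⋯ bₙ`, the
modules `G_{aₙ}` and `H_{aₙ}` are indecomposable, non-free, totally reflexive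
and pairwise non-isomorphic, and the stated `Hom`-identities hold. -/
theorem main_theorem {A : Type u} [CommRing A] [IsNoetherianRing A]
    [IsLocalRing A] {x y : A} (hxy : IsExactZeroDivisorPair x y)
    (hreg : Ideal.span ({x} : Set A) ⊓ Ideal.span ({y} : Set A) = ⊥)
    (b : ℕ → A)
    (hb : ∀ n, ¬ IsUnit (b n) ∧ Function.Injective
      fun m : A ⧸ Ideal.span ({x, y} : Set A) => b n • m)
    (a : ℕ → A) (ha : ∀ n, a n = ∏ i ∈ Finset.range (n + 1), b i) :
    (∀ n, IsTotallyReflexive A (Gmod x y (a n)) ∧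
      IsTotallyReflexive A (Hmod x y (a n))) ∧
    (∀ n, ¬ Module.Free A (Gmod x y (a n)) ∧
      ¬ Module.Free A (Hmod x y (a n))) ∧
    (∀ n, IsIndecomposableModule A (Gmod x y (a n)) ∧
      IsIndecomposableModule A (Hmod x y (a n))) ∧
    (∀ m n, m ≠ n → IsEmpty (Gmod x y (a m) ≃ₗ[A] Gmod x y (a n))) ∧
    (∀ m n, m ≠ n → IsEmpty (Hmod x y (a m) ≃ₗ[A] Hmod x y (a n))) ∧
    (∀ m n, IsEmpty (Gmod x y (a m) ≃ₗ[A] Hmod x y (a n))) ∧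
    (∀ m n, Nonempty ((Hmod x y (a m) →ₗ[A] Gmod x y (a n)) ≃ₗ[A]
      Gmod x y (a m * a n))) ∧
    (∀ m n, Nonempty ((Gmod x y (a m) →ₗ[A] Hmod x y (a n)) ≃ₗ[A]
      Hmod x y (a m * a n))) ∧
    (∀ m n, Nonempty ((Gmod x y (a m) →ₗ[A] Gmod x y (a n)) ≃ₗ[A]
      (Hmod x y (a n) →ₗ[A] Hmod x y (a m)))) ∧
    (∀ m n, n ≤ m → Nonempty ((Gmod x y (a m) →ₗ[A] Gmod x y (a n)) ≃ₗ[A]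
      Hmod x y (∏ i ∈ Finset.Ico (n + 1) (m + 1), b i))) ∧
    (∀ m n, m ≤ n → Nonempty ((Gmod x y (a m) →ₗ[A] Gmod x y (a n)) ≃ₗ[A]
      Gmod x y (∏ i ∈ Finset.Ico (m + 1) (n + 1), b i))) := by
  have h : RP x y := by
    obtain ⟨nx, ny, h1, h2⟩ := hxy
    refine ⟨?_, ?_, ?_, ?_, nx, ny⟩
    · exact (h2 x).2 (Ideal.mem_span_singleton_self x)
    · intro t ht
      obtain ⟨s, hs⟩ := Ideal.mem_span_singleton'.1 ((h1 t).1 (by rw [mul_comm]; exact ht))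
      exact ⟨s, by rw [← hs, mul_comm]⟩
    · intro t ht
      obtain ⟨s, hs⟩ := Ideal.mem_span_singleton'.1 ((h2 t).1 (by rw [mul_comm]; exact ht))
      exact ⟨s, by rw [← hs, mul_comm]⟩
    · intro s t e
      have : x * s ∈ Ideal.span ({x} : Set A) ⊓ Ideal.span ({y} : Set A) :=
        ⟨Ideal.mem_span_singleton'.2 ⟨s, mul_comm _ _⟩,
          Ideal.mem_span_singleton'.2 ⟨t, by rw [e, mul_comm]⟩⟩
      rw [hreg] at this
      exact this
  have hbR : ∀ n, Rg x y (b n) := by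
    intro n t p q e
    have h1 : (Ideal.Quotient.mk (Ideal.span ({x, y} : Set A)) t) = 0 := by
      apply (hb n).2
      change b n • Ideal.Quotient.mk (Ideal.span ({x, y} : Set A)) t = b n • 0
      rw [smul_zero]
      change Ideal.Quotient.mk (Ideal.span ({x, y} : Set A)) (b n * t) = 0
      rw [Ideal.Quotient.eq_zero_iff_mem]
      exact Ideal.mem_span_pair.2 ⟨p, q, by rw [e]; ring⟩
    rw [Ideal.Quotient.eq_zero_iff_mem] at h1
    obtain ⟨u, v, huv⟩ := Ideal.mem_span_pair.1 h1
    exact ⟨u, v, by rw [← huv]; ring⟩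
  have haR : ∀ n, Rg x y (a n) := fun n => by rw [ha]; exact Rg.prod hbR _
  have na : ∀ n, ¬ IsUnit (a n) := fun n hu => by
    rw [ha] at hu
    exact (hb 0).1 (isUnit_of_dvd_unit (Finset.dvd_prod_of_mem b (by simp)) hu)
  have hsplit : ∀ m n, m ≤ n → a n = a m * ∏ i ∈ Finset.Ico (m + 1) (n + 1), b i := by
    intro m n hmn
    rw [ha, ha, Finset.prod_range_mul_prod_Ico _ (by omega)]
  have hdR : ∀ m n, Rg x y (∏ i ∈ Finset.Ico (m + 1) (n + 1), b i) :=
    fun m n => Rg.prod hbR _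
  have nd : ∀ m n, m < n → ¬ IsUnit (∏ i ∈ Finset.Ico (m + 1) (n + 1), b i) := by
    intro m n hmn hu
    exact (hb n).1 (isUnit_of_dvd_unit
      (Finset.dvd_prod_of_mem b (Finset.mem_Ico.2 ⟨by omega, by omega⟩)) hu)
  refine ⟨fun n => ⟨tr_G h (haR n), tr_H h (haR n)⟩,
    fun n => ⟨nonfree_G h (haR n) (na n), nonfree_H h (haR n) (na n)⟩,
    fun n => ⟨indec_G h (haR n), indec_H h (haR n)⟩, ?_, ?_,
    fun m n => ⟨fun e => noniso_GH h (haR m) (haR n) (na m) e⟩,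
    fun m n => homHG h (haR m) (haR n), fun m n => homGH h (haR m) (haR n), ?_, ?_, ?_⟩
  · have key : ∀ m n, m < n → (Gmod x y (a m) ≃ₗ[A] Gmod x y (a n)) → False := by
      intro m n hmn e
      rw [hsplit m n hmn.le] at e
      exact noniso_GG h (haR m) (hdR m n) (nd m n hmn) e
    intro m n hmn
    refine ⟨fun e => ?_⟩
    rcases lt_or_gt_of_ne hmn with hl | hl
    · exact key m n hl e
    · exact key n m hl e.symm
  · have key : ∀ m n, m < n → (Hmod x y (a m) ≃ₗ[A] Hmod x y (a n)) → False := by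
      intro m n hmn e
      rw [hsplit m n hmn.le] at e
      exact noniso_HH h (haR m) (hdR m n) (nd m n hmn) e
    intro m n hmn
    refine ⟨fun e => ?_⟩
    rcases lt_or_gt_of_ne hmn with hl | hl
    · exact key m n hl e
    · exact key n m hl e.symm
  · intro m n
    rcases le_total m n with hmn | hmn
    · rw [hsplit m n hmn]
      obtain ⟨e1⟩ := homGG1 h (haR m) (hdR m n)
      obtain ⟨e2⟩ := homHH2 h (haR m) (hdR m n)
      exact ⟨e1.trans e2.symm⟩
    · rw [hsplit n m hmn]
      obtain ⟨e1⟩ := homGG2 h (haR n) (hdR n m)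
      obtain ⟨e2⟩ := homHH1 h (haR n) (hdR n m)
      exact ⟨e1.trans e2.symm⟩
  · intro m n hmn
    rw [hsplit n m hmn]
    exact homGG2 h (haR n) (hdR n m)
  · intro m n hmn
    rw [hsplit m n hmn]
    exact homGG1 h (haR m) (hdR m n)
end
end
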